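/- Octopus inequality for the complete graph with unit conductances: let $V$ be a finite set, $x\in V$, $n=|V|\geq 2$, $\nu$ the uniform measure on $S_V$. Then for any $f:S_V\to\mathbb{R}$, $\sum_{y\neq x}\nu[(f(\eta\tau_{xy})-f(\eta))^2] \geq \frac{1}{n-1}\sum_{\{y,z\}\subseteq V\setminus\{x\}}\nu[(f(\eta\tau_{yz})-f(\eta))^2]$. -/

import Mathlib

open Finset

noncomputable section

def permExp {V : Type*} [Fintype V] [DecidableEq V] (g : Equiv.Perm V → ℝ) : ℝ :=
  (∑ η : Equiv.Perm V, g η) / (Fintype.card (Equiv.Perm V))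

/- Identify `V` with `{0, …, m}`, the vertex `x` being sent to `m`. The Jucys–Murphy elements
`X i = ∑ j < i, (j i)` commute, so in an orthogonal representation they have an orthogonal joint
diagonalisation, and the inequality says that `∑ k < m, (k - a k) ≤ m * (m - a m)` for the
eigenvalues `a i` of the `X i` on a joint eigenvector `v`.

As in the Okounkov–Vershik theory, `v - (a (i + 1) - a i) • (i i+1) v` is a joint eigenvector with
`a i` and `a (i + 1)` exchanged, unless it vanishes, which forces `|a (i + 1) - a i| = 1`. This
exchange property lets an induction on `m` replace `a m` by `a (m + 1)`, or else compare the two. -/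

open Equiv (Perm swap swap_comm swap_self)
open scoped InnerProductSpace

section FinsetSums

variable {ι M : Type*} [AddCommMonoid M]

lemma sum_Iio_of_covBy [LinearOrder ι] [LocallyFiniteOrderBot ι] {i j : ι} (hij : i ⋖ j)
    (F : ι → M) : ∑ k ∈ Iio j, F k = ∑ k ∈ Iio i, F k + F i := by
  have hIio : Iio j = Iic i := coe_injective <| by simpa using hij.Iio_eq
  rw [hIio, Iic_eq_cons_Iio, sum_cons, add_comm]

lemma sum_Iio_sum_Iio_of_symm [LinearOrder ι] [LocallyFiniteOrderBot ι] {F : ι → ι → M}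
    (hF : ∀ j k, F j k = F k j) (hF₀ : ∀ j, F j j = 0) (i : ι) :
    ∑ j ∈ Iio i, ∑ k ∈ Iio i, F j k = 2 • ∑ k ∈ Iio i, ∑ j ∈ Iio k, F j k := by
  have hsplit (j k : ι) : F j k = (if j < k then F j k else 0) + if k < j then F k j else 0 := by
    rcases lt_trichotomy j k with h | rfl | h
    · simp [h, h.not_gt]
    · simp [hF₀]
    · simp [h, h.not_gt, hF j k]
  have hfilter : ∀ k ∈ Iio i, ∑ j ∈ Iio i, (if j < k then F j k else 0) = ∑ j ∈ Iio k, F j k := by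
    intro k hk
    rw [← sum_filter]
    congr 1
    ext j
    simpa using fun hj : j < k => hj.trans (mem_Iio.1 hk)
  rw [sum_congr rfl fun j _ => sum_congr rfl fun k _ => hsplit j k]
  simp only [sum_add_distrib]
  rw [sum_comm, ← two_nsmul, sum_congr rfl hfilter]

end FinsetSums

lemma castSucc_covBy_succ {n : ℕ} (i : Fin n) : i.castSucc ⋖ i.succ :=
  Fin.covBy_iff.2 (Nat.covBy_iff_add_one_eq.2 rfl)

section ContentSystem

variable {K : Type*} [CommRing K] [LinearOrder K] [IsStrictOrderedRing K] {n : ℕ}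

/-- The exchange property of the content vectors of standard Young tableaux with `n + 1` boxes,
abstracted from tableaux: adjacent contents may be exchanged unless they differ by `1`, which is
when the boxes `i` and `i + 1` of the tableau share a side. -/
structure IsContentSystem (W : Set (Fin (n + 1) → K)) : Prop where
  apply_zero : ∀ a ∈ W, a 0 = 0
  comp_swap_mem : ∀ a ∈ W, ∀ i : Fin n, |a i.succ - a i.castSucc| ≠ 1 →
    a ∘ swap i.castSucc i.succ ∈ W

namespace IsContentSystem

variable {W : Set (Fin (n + 1) → K)} {a : Fin (n + 1) → K}

lemma exists_lt_abs_sub_le_one (hW : IsContentSystem W) (ha : a ∈ W) {i : Fin (n + 1)}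
    (hi : i ≠ 0) : ∃ j < i, |a i - a j| ≤ 1 := by
  induction i using Fin.induction generalizing a with
  | zero => exact absurd rfl hi
  | succ i ih =>
    by_cases hadj : |a i.succ - a i.castSucc| = 1
    · exact ⟨i.castSucc, i.castSucc_lt_succ, hadj.le⟩
    have hb := hW.comp_swap_mem a ha i hadj
    rcases eq_or_ne i.castSucc 0 with hi₀ | hi₀
    · have hsucc : a i.succ = 0 := by simpa [hi₀] using hW.apply_zero _ hb
      exact ⟨0, i.succ_pos, by simp [hsucc, hW.apply_zero a ha]⟩
    · obtain ⟨j, hj, hij⟩ := ih hb hi₀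
      have hj' : j < i.succ := hj.trans i.castSucc_lt_succ
      exact ⟨j, hj', by simpa [Equiv.swap_apply_of_ne_of_ne hj.ne hj'.ne] using hij⟩

lemma abs_sub_le (hW : IsContentSystem W) (ha : a ∈ W) {i j : Fin (n + 1)} (hji : j ≤ i) :
    |a i - a j| ≤ (i : ℕ) := by
  induction i using WellFoundedLT.induction generalizing j with
  | ind i ih =>
    rcases hji.eq_or_lt with rfl | hji
    · simp
    obtain ⟨k, hki, hk⟩ := hW.exists_lt_abs_sub_le_one ha (Fin.ne_zero_of_lt hji)
    have hkj : |a k - a j| + 1 ≤ (i : ℕ) := by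
      rcases le_total j k with hjk | hjk
      · have hlt : (k : ℕ) + 1 ≤ (i : ℕ) := hki
        have hlt' : ((k : ℕ) : K) + 1 ≤ (i : ℕ) := by exact_mod_cast hlt
        linarith [ih k hki hjk]
      · have hlt : (j : ℕ) + 1 ≤ (i : ℕ) := hji
        have hlt' : ((j : ℕ) : K) + 1 ≤ (i : ℕ) := by exact_mod_cast hlt
        rw [abs_sub_comm]
        linarith [ih j hji hjk]
    linarith [_root_.abs_sub_le (a i) (a k) (a j)]

lemma sum_Iio_sub_le (hW : IsContentSystem W) (ha : a ∈ W) (i : Fin (n + 1)) :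
    ∑ k ∈ Iio i, ((k : ℕ) - a k) ≤ (i : ℕ) * ((i : ℕ) - a i) := by
  induction i using Fin.induction generalizing a with
  | zero => simp [Iio_eq_empty.2 (isBot_zero (α := Fin (n + 1))).isMin]
  | succ i ih =>
    rw [sum_Iio_of_covBy (castSucc_covBy_succ i)]
    simp only [Fin.val_castSucc, Fin.val_succ, Nat.cast_add, Nat.cast_one] at ih ⊢
    have hi : (0 : K) ≤ (i : ℕ) := Nat.cast_nonneg _
    by_cases hadj : |a i.succ - a i.castSucc| = 1
    · have hstep : a i.succ ≤ a i.castSucc + 1 := by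
        linarith [le_abs_self (a i.succ - a i.castSucc)]
      linarith [ih ha, mul_le_mul_of_nonneg_left hstep hi]
    · have hexchange : ∑ k ∈ Iio i.castSucc, ((k : ℕ) - a k) ≤ (i : ℕ) * ((i : ℕ) - a i.succ) := by
        convert ih (hW.comp_swap_mem a ha i hadj) using 1
        · refine sum_congr rfl fun k hk => ?_
          have hk' := mem_Iio.1 hk
          rw [Function.comp_apply,
            Equiv.swap_apply_of_ne_of_ne hk'.ne (hk'.trans i.castSucc_lt_succ).ne]
        · simp
      have hgap : a i.succ - a i.castSucc ≤ (i : ℕ) + 1 := by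
        simpa using (le_abs_self _).trans (hW.abs_sub_le ha i.castSucc_lt_succ.le)
      linarith

end IsContentSystem

end ContentSystem

section JucysMurphy

lemma swap_apply_lt_iff {ι : Type*} [LinearOrder ι] {i j k : ι} (hjk : j < i ↔ k < i) (l : ι) :
    swap j k l < i ↔ l < i := by
  rw [Equiv.swap_apply_def]
  split_ifs <;> simp_all

variable {ι A : Type*} [LinearOrder ι] [LocallyFiniteOrderBot ι]

/-- The image of the `i`-th Jucys–Murphy element, the sum of the transpositions `(j i)` with
`j < i`, under a homomorphism `φ` from the symmetric group to a ring. -/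
def jucysMurphy [NonAssocSemiring A] (φ : Perm ι →* A) (i : ι) : A := ∑ j ∈ Iio i, φ (swap j i)

lemma commute_map_jucysMurphy [Semiring A] (φ : Perm ι →* A) {σ : Perm ι} {i : ι} (hi : σ i = i)
    (hσ : ∀ j, σ j < i ↔ j < i) : Commute (φ σ) (jucysMurphy φ i) := by
  simp only [Commute, SemiconjBy, jucysMurphy, mul_sum, sum_mul, ← map_mul]
  refine sum_equiv σ (by simp [hσ]) fun j _ => ?_
  rw [Equiv.mul_swap_eq_swap_mul, hi]

lemma commute_map_swap_jucysMurphy [Semiring A] (φ : Perm ι →* A) {i j k : ι} (hj : j ≠ i)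
    (hk : k ≠ i) (hjk : j < i ↔ k < i) : Commute (φ (swap j k)) (jucysMurphy φ i) :=
  commute_map_jucysMurphy φ (Equiv.swap_apply_of_ne_of_ne hj.symm hk.symm) (swap_apply_lt_iff hjk)

lemma commute_jucysMurphy [Semiring A] (φ : Perm ι →* A) (i j : ι) :
    Commute (jucysMurphy φ i) (jucysMurphy φ j) := by
  wlog hij : i < j generalizing i j
  · rcases (not_lt.1 hij).eq_or_lt with rfl | hji
    · exact Commute.refl _
    · exact (this j i hji).symm
  refine Commute.sum_left _ _ _ fun k hk => ?_
  have hkj : k < j := (mem_Iio.1 hk).trans hij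
  exact commute_map_swap_jucysMurphy φ hkj.ne hij.ne (iff_of_true hkj hij)

lemma jucysMurphy_mul_map_swap [Semiring A] (φ : Perm ι →* A) {i j : ι} (hij : i ⋖ j) :
    jucysMurphy φ j * φ (swap i j) = φ (swap i j) * jucysMurphy φ i + 1 := by
  rw [jucysMurphy, sum_Iio_of_covBy hij, add_mul, ← map_mul, Equiv.swap_mul_self, map_one,
    jucysMurphy, sum_mul, mul_sum]
  congr 1
  refine sum_congr rfl fun k hk => ?_
  have hki : k < i := mem_Iio.1 hk
  rw [← map_mul, ← map_mul, Equiv.mul_swap_eq_swap_mul (swap i j), Equiv.swap_apply_left,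
    Equiv.swap_apply_of_ne_of_ne hki.ne (hki.trans hij.lt).ne]

end JucysMurphy

section Weights

variable {ι K E : Type*} [LinearOrder ι] [LocallyFiniteOrderBot ι] [Field K] [AddCommGroup E]
  [Module K E]

/-- The weights of a representation of a symmetric group: the families of eigenvalues of the
Jucys–Murphy elements on their joint eigenvectors. -/
def jucysMurphyWeights (ρ : Representation K (Perm ι) E) : Set (ι → K) :=
  {a | ∃ v ≠ 0, ∀ i, jucysMurphy ρ i v = a i • v}

lemma comp_swap_mem_jucysMurphyWeights (ρ : Representation K (Perm ι) E) {a : ι → K}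
    (ha : a ∈ jucysMurphyWeights ρ) {i j : ι} (hij : i ⋖ j) (h : (a j - a i) ^ 2 ≠ 1) :
    a ∘ swap i j ∈ jucysMurphyWeights ρ := by
  obtain ⟨v, hv, hav⟩ := ha
  have hsq (u : E) : ρ (swap i j) (ρ (swap i j) u) = u := by
    rw [← Module.End.mul_apply, ← map_mul, Equiv.swap_mul_self, map_one, Module.End.one_apply]
  have hrel (u : E) : jucysMurphy ρ j (ρ (swap i j) u) = ρ (swap i j) (jucysMurphy ρ i u) + u :=
    LinearMap.congr_fun (jucysMurphy_mul_map_swap ρ hij) u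
  have hj : jucysMurphy ρ j (ρ (swap i j) v) = a i • ρ (swap i j) v + v := by
    rw [hrel, hav, map_smul]
  have hi : jucysMurphy ρ i (ρ (swap i j) v) = a j • ρ (swap i j) v - v := by
    have := congrArg (ρ (swap i j)) (hrel (ρ (swap i j) v))
    rw [hsq, hav, map_smul, map_add, hsq, hsq] at this
    exact eq_sub_of_add_eq this.symm
  refine ⟨v - (a j - a i) • ρ (swap i j) v, fun h₀ => h ?_, fun k => ?_⟩
  · have hv' : v = (a j - a i) • ρ (swap i j) v := sub_eq_zero.1 h₀
    have hv'' : ρ (swap i j) v = (a j - a i) • v := by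
      simpa only [map_smul, hsq] using congrArg (ρ (swap i j)) hv'
    rw [hv'', smul_smul, ← sq] at hv'
    exact smul_left_injective K hv (by simpa using hv'.symm)
  · rw [map_sub, map_smul, hav, Function.comp_apply]
    rcases eq_or_ne k i with rfl | hki
    · rw [hi, Equiv.swap_apply_left]
      module
    rcases eq_or_ne k j with rfl | hkj
    · rw [hj, Equiv.swap_apply_right]
      module
    have hlt : i < k ↔ j < k := ⟨fun h => (hij.ge_of_gt h).lt_of_ne' hkj, hij.lt.trans⟩
    have hcomm := (commute_map_swap_jucysMurphy ρ hki.symm hkj.symm hlt).eq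
    have hk : jucysMurphy ρ k (ρ (swap i j) v) = a k • ρ (swap i j) v := by
      rw [← Module.End.mul_apply, ← hcomm, Module.End.mul_apply, hav, map_smul]
    rw [hk, Equiv.swap_apply_of_ne_of_ne hki hkj]
    module

lemma isContentSystem_jucysMurphyWeights {K : Type*} [Field K] [LinearOrder K]
    [IsStrictOrderedRing K] [Module K E] {n : ℕ} (ρ : Representation K (Perm (Fin (n + 1))) E) :
    IsContentSystem (jucysMurphyWeights ρ) := by
  constructor
  · rintro a ⟨v, hv, hav⟩
    have h₀ : a 0 • v = 0 := by
      simpa only [jucysMurphy, Iio_eq_empty.2 isBot_zero.isMin, sum_empty, LinearMap.zero_apply]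
        using (hav 0).symm
    exact (smul_eq_zero.1 h₀).resolve_right hv
  · intro a ha i hadj
    refine comp_swap_mem_jucysMurphyWeights ρ ha (castSucc_covBy_succ i) fun h => hadj ?_
    rwa [← abs_one, ← sq_eq_sq_iff_abs_eq_abs, one_pow]

end Weights

section OrthogonalRepresentations

variable {E : Type*} [NormedAddCommGroup E] [InnerProductSpace ℝ E]

lemma inner_apply_self_nonneg_of_joint_eigenvectors [FiniteDimensional ℝ E] {ι : Type*}
    {T : ι → E →ₗ[ℝ] E} (hT : ∀ i, (T i).IsSymmetric) (hcomm : Pairwise (Function.onFun Commute T))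
    {S : E →ₗ[ℝ] E} (hS : ∀ (a : ι → ℝ) (v : E), v ≠ 0 → (∀ i, T i v = a i • v) →
      ∃ c : ℝ, 0 ≤ c ∧ S v = c • v) (v : E) : 0 ≤ ⟪S v, v⟫_ℝ := by
  have hv : v ∈ ⨆ a : ι → ℝ, ⨅ i, Module.End.eigenspace (T i) (a i) := by
    rw [LinearMap.IsSymmetric.iSup_iInf_eq_top_of_commute hT hcomm]
    exact Submodule.mem_top
  obtain ⟨u, hu, rfl⟩ := (Submodule.mem_iSup_iff_exists_finsupp _ v).1 hv
  have hS' (a : ι → ℝ) : ∃ c : ℝ, 0 ≤ c ∧ S (u a) = c • u a := by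
    rcases eq_or_ne (u a) 0 with h₀ | h₀
    · exact ⟨0, le_rfl, by simp [h₀]⟩
    · exact hS a _ h₀ fun i => Module.End.mem_eigenspace_iff.1 ((Submodule.mem_iInf _).1 (hu a) i)
  choose c hc hcu using hS'
  have horth := (LinearMap.IsSymmetric.orthogonalFamily_iInf_eigenspaces hT).inner_sum
    (fun a => c a • ⟨u a, hu a⟩) (fun a => ⟨u a, hu a⟩) u.support
  simp only [map_smul, Submodule.coe_subtypeₗᵢ, Submodule.subtype_apply] at horth
  simp only [Finsupp.sum, map_sum, hcu]
  rw [horth]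
  refine sum_nonneg fun a _ => ?_
  rw [real_inner_smul_left]
  exact mul_nonneg (hc a) real_inner_self_nonneg

lemma isSymmetric_apply_of_sq_eq_one {G : Type*} [Monoid G] {ρ : Representation ℝ G E}
    (hρ : ∀ g v, ‖ρ g v‖ = ‖v‖) {g : G} (hg : g * g = 1) : (ρ g).IsSymmetric := by
  intro u v
  have hinner := (LinearMap.norm_map_iff_inner_map_map (ρ g)).1 (hρ g)
  rw [← hinner, ← Module.End.mul_apply, ← map_mul, hg, map_one, Module.End.one_apply]

section LinearOrder

variable {ι : Type*} [LinearOrder ι] [LocallyFiniteOrderBot ι] {ρ : Representation ℝ (Perm ι) E}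

lemma isSymmetric_jucysMurphy (hρ : ∀ σ v, ‖ρ σ v‖ = ‖v‖) (i : ι) :
    (jucysMurphy ρ i).IsSymmetric := by
  intro u v
  simp only [jucysMurphy, LinearMap.sum_apply, sum_inner, inner_sum]
  exact sum_congr rfl fun j _ => isSymmetric_apply_of_sq_eq_one hρ (Equiv.swap_mul_self j i) u v

lemma sum_norm_swap_sub_sq (hρ : ∀ σ v, ‖ρ σ v‖ = ‖v‖) (i : ι) (v : E) :
    ∑ j ∈ Iio i, ‖ρ (swap j i) v - v‖ ^ 2 =
      2 * ⟪(#(Iio i) : ℝ) • v - jucysMurphy ρ i v, v⟫_ℝ := by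
  have hterm (σ : Perm ι) : ‖ρ σ v - v‖ ^ 2 = 2 * (⟪v, v⟫_ℝ - ⟪ρ σ v, v⟫_ℝ) := by
    rw [norm_sub_sq_real, hρ, real_inner_self_eq_norm_sq]
    ring
  simp only [hterm, ← mul_sum, sum_sub_distrib, sum_const, nsmul_eq_mul, jucysMurphy,
    LinearMap.sum_apply, inner_sub_left, sum_inner, real_inner_smul_left]

end LinearOrder

variable [FiniteDimensional ℝ E]

lemma sum_sum_norm_swap_sub_sq_le {n : ℕ} {ρ : Representation ℝ (Perm (Fin (n + 1))) E}
    (hρ : ∀ σ v, ‖ρ σ v‖ = ‖v‖) (i : Fin (n + 1)) (v : E) :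
    ∑ k ∈ Iio i, ∑ j ∈ Iio k, ‖ρ (swap j k) v - v‖ ^ 2 ≤
      (i : ℕ) * ∑ j ∈ Iio i, ‖ρ (swap j i) v - v‖ ^ 2 := by
  let L (k : Fin (n + 1)) : E →ₗ[ℝ] E := ((k : ℕ) : ℝ) • 1 - jucysMurphy ρ k
  have hL (k : Fin (n + 1)) :
      ∑ j ∈ Iio k, ‖ρ (swap j k) v - v‖ ^ 2 = 2 * ⟪L k v, v⟫_ℝ := by
    simp [sum_norm_swap_sub_sq hρ, L]
  have hnonneg : 0 ≤ ⟪(((i : ℕ) : ℝ) • L i - ∑ k ∈ Iio i, L k) v, v⟫_ℝ := by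
    refine inner_apply_self_nonneg_of_joint_eigenvectors (isSymmetric_jucysMurphy hρ)
      (fun j k _ => commute_jucysMurphy ρ j k) (fun a u hu hau => ?_) v
    have hLu (k : Fin (n + 1)) : L k u = ((k : ℕ) - a k) • u := by
      simp [L, hau, sub_smul]
    refine ⟨(i : ℕ) * ((i : ℕ) - a i) - ∑ k ∈ Iio i, ((k : ℕ) - a k), ?_, ?_⟩
    · exact sub_nonneg.2 ((isContentSystem_jucysMurphyWeights ρ).sum_Iio_sub_le ⟨u, hu, hau⟩ i)
    · simp [hLu, sub_smul, mul_smul, sum_smul]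
  simp only [hL, ← mul_sum, ← sum_inner]
  simp only [LinearMap.sub_apply, LinearMap.smul_apply, LinearMap.sum_apply, inner_sub_left,
    real_inner_smul_left] at hnonneg
  linarith

theorem octopus_complete_graph_general {V : Type*} [Fintype V] [DecidableEq V]
    (hcard : 2 ≤ Fintype.card V) (x : V) {ρ : Representation ℝ (Perm V) E}
    (hρ : ∀ σ v, ‖ρ σ v‖ = ‖v‖) (v : E) :
    ∑ y ∈ univ.erase x, ‖ρ (swap x y) v - v‖ ^ 2 ≥
      ((Fintype.card V : ℝ) - 1)⁻¹ *
        ((1 / 2) * ∑ y ∈ univ.erase x, ∑ z ∈ univ.erase x, ‖ρ (swap y z) v - v‖ ^ 2) := by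
  obtain ⟨m, hm⟩ : ∃ m, Fintype.card V = m + 1 := ⟨Fintype.card V - 1, by omega⟩
  have hm₀ : (0 : ℝ) < m := by exact_mod_cast (by omega : 0 < m)
  obtain ⟨e, he⟩ : ∃ e : Fin (m + 1) ≃ V, e (Fin.last m) = x := by
    let e₀ := (Fintype.equivFinOfCardEq hm).symm
    exact ⟨e₀.trans (swap (e₀ (Fin.last m)) x), by simp⟩
  have hswap (j k : Fin (m + 1)) : e.permCongrHom (swap j k) = swap (e j) (e k) :=
    Equiv.symm_trans_swap_trans j k e
  have hsum (F : V → ℝ) : ∑ y ∈ univ.erase x, F y = ∑ k ∈ Iio (Fin.last m), F (e k) := by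
    refine (sum_equiv e (fun k => ?_) fun k _ => rfl).symm
    rw [mem_Iio, mem_erase, ← he, e.injective.ne_iff, Fin.lt_last_iff_ne_last]
    simp
  have h := sum_sum_norm_swap_sub_sq_le (ρ := ρ.comp e.permCongrHom.toMonoidHom)
    (fun σ => hρ _) (Fin.last m) v
  simp only [MonoidHom.comp_apply, MulEquiv.coe_toMonoidHom, hswap, he, Fin.val_last] at h
  have hpairs := sum_Iio_sum_Iio_of_symm (F := fun j k => ‖ρ (swap (e j) (e k)) v - v‖ ^ 2)
    (fun j k => by rw [swap_comm]) (fun j => by simp [swap_self, ← Equiv.Perm.one_def])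
    (Fin.last m)
  simp only [hsum, hpairs, swap_comm x, hm]
  rw [Nat.cast_add_one, add_sub_cancel_right, ge_iff_le, inv_mul_le_iff₀ hm₀, nsmul_eq_mul]
  linarith

end OrthogonalRepresentations

section RegularRepresentation

/-- The right regular representation of a finite group on `ℓ²(G)`, `(g • v) η = v (η * g)`. -/
def rightRegular (G : Type*) [Group G] [Fintype G] : Representation ℝ G (EuclideanSpace ℝ G) where
  toFun g := (LinearIsometryEquiv.piLpCongrLeft 2 ℝ ℝ (Equiv.mulRight g⁻¹)).toLinearEquiv
  map_one' := by
    ext v η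
    simp [← Equiv.Perm.inv_def]
  map_mul' g h := by
    ext v η
    simp [Equiv.Perm.mul_def, mul_assoc]

variable {G : Type*} [Group G] [Fintype G]

lemma norm_rightRegular_apply (g : G) (v : EuclideanSpace ℝ G) : ‖rightRegular G g v‖ = ‖v‖ :=
  LinearIsometryEquiv.norm_map _ v

lemma rightRegular_apply_apply (g : G) (v : EuclideanSpace ℝ G) (η : G) :
    rightRegular G g v η = v (η * g) := by
  simp [rightRegular]

lemma permExp_sq_sub {V : Type*} [Fintype V] [DecidableEq V] (f : Perm V → ℝ) (g : Perm V) :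
    letI v : EuclideanSpace ℝ (Perm V) := (√(Fintype.card (Perm V)))⁻¹ • WithLp.toLp 2 f
    permExp (fun η => (f (η * g) - f η) ^ 2) = ‖rightRegular (Perm V) g v - v‖ ^ 2 := by
  simp only [permExp, EuclideanSpace.norm_sq_eq, PiLp.sub_apply, rightRegular_apply_apply,
    PiLp.smul_apply, smul_eq_mul, ← mul_sub, Real.norm_eq_abs, sq_abs, mul_pow, inv_pow,
    Real.sq_sqrt (Nat.cast_nonneg _), ← mul_sum]
  rw [div_eq_inv_mul]

end RegularRepresentation

theorem octopus_complete_graph {V : Type*} [Fintype V] [DecidableEq V]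
    (hcard : 2 ≤ Fintype.card V) (x : V) (f : Equiv.Perm V → ℝ) :
    ∑ y ∈ univ.erase x, permExp (fun η => (f (η * Equiv.swap x y) - f η) ^ 2) ≥
      ((Fintype.card V : ℝ) - 1)⁻¹ *
        ((1 / 2) * ∑ y ∈ univ.erase x, ∑ z ∈ univ.erase x,
          permExp (fun η => (f (η * Equiv.swap y z) - f η) ^ 2)) := by
  simpa only [permExp_sq_sub] using octopus_complete_graph_general hcard x norm_rightRegular_apply _
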